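/- arXiv:2208.11447 — 6 statements merged into one kernel-verified Lean document; each statement's English description precedes it below -/
import Mathlib

section
/- Let A ∈ ℂ^{N×N} be positive real with δ := min{Re(vᴴAv) : ‖v‖ = 1} and ρ := min{Re(vᴴA⁻¹v) : ‖v‖ = 1}, let b ∈ ℂᴺ, and let μ be a nonnegative Borel measure on [0,∞) with ∫₀^∞ (1+t)⁻¹ dμ(t) < ∞, so that f(A)b := ∫₀^∞ (tI+A)⁻¹b dμ(t) is well defined. Let ε ∈ [0,1) and let S ∈ ℂ^{s×N} be an ε-subspace embedding for the Krylov space 𝒦_{m+1}(A,b). For each t ≥ 0 let x̃_m(t) ∈ 𝒦_m(A,b) satisfy ‖S(b−(tI+A)x̃_m(t))‖ ≤ ‖S(b−(tI+A)x)‖ for all x ∈ 𝒦_m(A,b), assume t ↦ x̃_m(t) is μ-Bochner integrable, and set f̃_m := ∫₀^∞ x̃_m(t) dμ(t). Then ‖A(f(A)b − f̃_m)‖ ≤ C₁ · C_ε · ‖b‖ · (sin β₀)^m, where C₁ = ‖A‖ · ∫₀^∞ (t+ρ‖A‖²)⁻¹ dμ(t), C_ε = √((1+ε)/(1−ε)),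 and sin β₀ = √(1 − (δ/‖A‖)²). -/
open Matrix MeasureTheory

noncomputable section

/-- `E n` is the Euclidean space `ℂⁿ`. -/
abbrev E (n : ℕ) : Type := EuclideanSpace ℂ (Fin n)

/-- Action of a (rectangular) matrix on a Euclidean vector. -/
def mulE {p q : ℕ} (M : Matrix (Fin p) (Fin q) ℂ) (v : E q) : E p :=
  Matrix.toEuclideanLin M v

/-- Spectral (operator 2-) norm of a (rectangular) matrix. -/
def opNorm {p q : ℕ} (M : Matrix (Fin p) (Fin q) ℂ) : ℝ :=
  ‖LinearMap.toContinuousLinearMap (Matrix.toEuclideanLin M)‖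

/-- The `m`-th Krylov space `𝒦_m(A,b) = span{b, Ab, …, A^{m-1}b}`. -/
def Krylov {N : ℕ} (A : Matrix (Fin N) (Fin N) ℂ) (b : E N) (m : ℕ) :
    Submodule ℂ (E N) :=
  Submodule.span ℂ {v | ∃ j < m, v = mulE (A ^ j) b}

/-- `S` is an `ε`-subspace embedding for the subspace `𝒱`. -/
def IsSubspaceEmbedding {s N : ℕ} (S : Matrix (Fin s) (Fin N) ℂ) (ε : ℝ)
    (𝒱 : Submodule ℂ (E N)) : Prop :=
  ∀ v ∈ 𝒱, (1 - ε) * ‖v‖ ^ 2 ≤ ‖mulE S v‖ ^ 2 ∧ ‖mulE S v‖ ^ 2 ≤ (1 + ε) * ‖v‖ ^ 2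

/-- A matrix is positive real if `Re(vᴴAv) > 0` for all nonzero `v`. -/
def IsPositiveReal {N : ℕ} (A : Matrix (Fin N) (Fin N) ℂ) : Prop :=
  ∀ v : E N, v ≠ 0 → 0 < (inner ℂ v (mulE A v) : ℂ).re


lemma mulE_add {p q : ℕ} (M : Matrix (Fin p) (Fin q) ℂ) (v w : E q) :
    mulE M (v + w) = mulE M v + mulE M w := by simp [mulE]

lemma mulE_sub {p q : ℕ} (M : Matrix (Fin p) (Fin q) ℂ) (v w : E q) :
    mulE M (v - w) = mulE M v - mulE M w := by simp [mulE]

lemma mulE_smul {p q : ℕ} (M : Matrix (Fin p) (Fin q) ℂ) (c : ℂ) (v : E q) :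
    mulE M (c • v) = c • mulE M v := by simp [mulE]

lemma mulE_zero {p q : ℕ} (M : Matrix (Fin p) (Fin q) ℂ) :
    mulE M (0 : E q) = 0 := by simp [mulE]

lemma mulE_one {q : ℕ} (v : E q) : mulE (1 : Matrix (Fin q) (Fin q) ℂ) v = v := by
  simp [mulE, Matrix.toLpLin_one]

lemma mulE_mul {q : ℕ} (M P : Matrix (Fin q) (Fin q) ℂ) (v : E q) :
    mulE (M * P) v = mulE M (mulE P v) := by
  simp [mulE, Matrix.toLpLin_apply, Matrix.mulVec_mulVec]

lemma mulE_shift {q : ℕ} (t : ℂ) (A : Matrix (Fin q) (Fin q) ℂ) (v : E q) :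
    mulE (t • (1 : Matrix (Fin q) (Fin q) ℂ) + A) v = t • v + mulE A v := by
  have := mulE_one v
  simp only [mulE] at *
  rw [map_add, map_smul, LinearMap.add_apply, LinearMap.smul_apply, this]

lemma norm_mulE_le {p q : ℕ} (M : Matrix (Fin p) (Fin q) ℂ) (v : E q) :
    ‖mulE M v‖ ≤ opNorm M * ‖v‖ :=
  (LinearMap.toContinuousLinearMap (Matrix.toEuclideanLin M)).le_opNorm v

lemma isUnit_det_of_inj {q : ℕ} (M : Matrix (Fin q) (Fin q) ℂ)
    (h : ∀ v : E q, mulE M v = 0 → v = 0) : IsUnit M.det := by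
  rw [← Matrix.isUnit_iff_isUnit_det, ← Matrix.mulVec_injective_iff_isUnit]
  intro v w hvw
  have := h (WithLp.toLp 2 (v - w)) (by
    simp only [mulE, Matrix.toLpLin_apply, Matrix.mulVec_sub]
    have hvw : M *ᵥ v = M *ᵥ w := hvw
    simp [hvw])
  have h2 : v - w = 0 := congrArg (WithLp.ofLp) this
  exact sub_eq_zero.mp h2

lemma krylov_mono {N : ℕ} (A : Matrix (Fin N) (Fin N) ℂ) (b : E N) (m : ℕ) :
    Krylov A b m ≤ Krylov A b (m + 1) := by
  apply Submodule.span_mono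
  rintro v ⟨j, hj, rfl⟩
  exact ⟨j, by omega, rfl⟩

lemma krylov_b {N : ℕ} (A : Matrix (Fin N) (Fin N) ℂ) (b : E N) (m : ℕ) :
    b ∈ Krylov A b (m + 1) :=
  Submodule.subset_span ⟨0, by omega, by rw [pow_zero, mulE_one]⟩

lemma krylov_A {N : ℕ} (A : Matrix (Fin N) (Fin N) ℂ) (b : E N) (m : ℕ) (v : E N)
    (hv : v ∈ Krylov A b m) : mulE A v ∈ Krylov A b (m + 1) := by
  have : Krylov A b m ≤ (Krylov A b (m + 1)).comap (Matrix.toEuclideanLin A) := by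
    apply Submodule.span_le.mpr
    rintro v ⟨j, hj, rfl⟩
    refine Submodule.subset_span ⟨j + 1, by omega, ?_⟩
    rw [pow_succ', mulE_mul]; rfl
  exact this hv

lemma krylov_res {N : ℕ} (A : Matrix (Fin N) (Fin N) ℂ) (b : E N) (m : ℕ) (t : ℂ) (v : E N)
    (hv : v ∈ Krylov A b m) :
    b - mulE (t • (1 : Matrix (Fin N) (Fin N) ℂ) + A) v ∈ Krylov A b (m + 1) := by
  rw [mulE_shift]
  exact Submodule.sub_mem _ (krylov_b A b m) (Submodule.add_mem _
    (Submodule.smul_mem _ _ (krylov_mono A b m hv)) (krylov_A A b m v hv))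

lemma re_lower {N : ℕ} (M : Matrix (Fin N) (Fin N) ℂ) (δ : ℝ)
    (h : ∀ v : E N, ‖v‖ = 1 → δ ≤ (inner ℂ v (mulE M v) : ℂ).re) (v : E N) :
    δ * ‖v‖ ^ 2 ≤ (inner ℂ v (mulE M v) : ℂ).re := by
  by_cases hv : v = 0
  · simp [hv]
  have hn : 0 < ‖v‖ := norm_pos_iff.mpr hv
  have h1 := h (((‖v‖⁻¹ : ℝ) : ℂ) • v) (by
    rw [norm_smul, Complex.norm_real, Real.norm_of_nonneg (by positivity)]
    field_simp)
  rw [mulE_smul, inner_smul_left, inner_smul_right, Complex.conj_ofReal,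
    Complex.re_ofReal_mul, Complex.re_ofReal_mul] at h1
  calc δ * ‖v‖ ^ 2 ≤ (‖v‖⁻¹ * (‖v‖⁻¹ * (inner ℂ v (mulE M v) : ℂ).re)) * ‖v‖ ^ 2 := by gcongr
    _ = _ := by field_simp

/-- one step of damped Richardson -/
lemma step_bound {N : ℕ} (B : Matrix (Fin N) (Fin N) ℂ) (d L : ℝ) (hL : 0 < L) (hd : 0 < d)
    (h1 : ∀ v : E N, d * ‖v‖ ^ 2 ≤ (inner ℂ v (mulE B v) : ℂ).re)
    (h2 : ∀ v : E N, ‖mulE B v‖ ≤ L * ‖v‖) (v : E N) :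
    ‖v - ((d / L ^ 2 : ℝ) : ℂ) • mulE B v‖ ≤ Real.sqrt (1 - (d / L) ^ 2) * ‖v‖ := by
  have key : ‖v - ((d / L ^ 2 : ℝ) : ℂ) • mulE B v‖ ^ 2 ≤ (1 - (d / L) ^ 2) * ‖v‖ ^ 2 := by
    rw [@norm_sub_sq ℂ, inner_smul_right, norm_smul, Complex.norm_real,
      Real.norm_of_nonneg (by positivity)]
    have e : RCLike.re (((d / L ^ 2 : ℝ) : ℂ) * inner ℂ v (mulE B v))
        = d / L ^ 2 * (inner ℂ v (mulE B v) : ℂ).re := Complex.re_ofReal_mul _ _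
    rw [e, mul_pow]
    have a1 : d / L ^ 2 * (d * ‖v‖ ^ 2) ≤ d / L ^ 2 * (inner ℂ v (mulE B v) : ℂ).re := by
      gcongr; exact h1 v
    have a2 : (d / L ^ 2) ^ 2 * ‖mulE B v‖ ^ 2 ≤ (d / L ^ 2) ^ 2 * (L * ‖v‖) ^ 2 := by
      gcongr; exact h2 v
    have a3 : (d / L ^ 2) ^ 2 * (L * ‖v‖) ^ 2 = d / L ^ 2 * (d * ‖v‖ ^ 2) := by
      field_simp
    have a4 : (d / L) ^ 2 * ‖v‖ ^ 2 = d / L ^ 2 * (d * ‖v‖ ^ 2) := by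
      field_simp
    rw [sub_mul, one_mul, a4]
    linarith
  by_cases hv : v = 0
  · simp [hv, mulE_zero]
  have hn : 0 < ‖v‖ ^ 2 := by have := norm_pos_iff.mpr hv; positivity
  have hq : 0 ≤ 1 - (d / L) ^ 2 := by
    by_contra! hc
    nlinarith [sq_nonneg ‖v - ((d / L ^ 2 : ℝ) : ℂ) • mulE B v‖]
  apply abs_le_of_sq_le_sq' _ (by positivity) |>.2
  rw [mul_pow, Real.sq_sqrt hq]
  exact key

lemma exists_poly {N : ℕ} (A : Matrix (Fin N) (Fin N) ℂ) (b : E N) (t : ℂ) (a : ℂ) (q : ℝ)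
    (hq : 0 ≤ q)
    (h : ∀ v : E N, ‖v - a • mulE (t • (1 : Matrix (Fin N) (Fin N) ℂ) + A) v‖ ≤ q * ‖v‖)
    (m : ℕ) : ∃ x ∈ Krylov A b m,
      ‖b - mulE (t • (1 : Matrix (Fin N) (Fin N) ℂ) + A) x‖ ≤ ‖b‖ * q ^ m := by
  induction m with
  | zero => exact ⟨0, Submodule.zero_mem _, by simp [mulE_zero]⟩
  | succ m ih =>
    obtain ⟨x, hx, hr⟩ := ih
    set B := t • (1 : Matrix (Fin N) (Fin N) ℂ) + A with hB
    refine ⟨x + a • (b - mulE B x), Submodule.add_mem _ (krylov_mono A b m hx)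
      (Submodule.smul_mem _ _ (krylov_res A b m t x hx)), ?_⟩
    have e : b - mulE B (x + a • (b - mulE B x))
        = (b - mulE B x) - a • mulE B (b - mulE B x) := by
      rw [mulE_add, mulE_smul]; abel
    rw [e]
    calc _ ≤ q * ‖b - mulE B x‖ := h _
      _ ≤ q * (‖b‖ * q ^ m) := by gcongr
      _ = _ := by ring

/-- `‖A v‖ (t + ρ‖A‖²) ≤ ‖A‖ ‖(t + A) v‖`. -/
lemma resolvent_bound {N : ℕ} (A : Matrix (Fin N) (Fin N) ℂ) (ρ K t : ℝ) (hK : 0 < K)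
    (ht : 0 ≤ t) (hρ : 0 ≤ ρ) (hρK : ρ * K ≤ 1)
    (h1 : ∀ v : E N, ρ * ‖mulE A v‖ ^ 2 ≤ (inner ℂ v (mulE A v) : ℂ).re)
    (h2 : ∀ v : E N, ‖mulE A v‖ ≤ K * ‖v‖) (v : E N) :
    ‖mulE A v‖ * (t + ρ * K ^ 2) ≤
      K * ‖mulE ((t : ℂ) • (1 : Matrix (Fin N) (Fin N) ℂ) + A) v‖ := by
  apply abs_le_of_sq_le_sq' _ (by positivity) |>.2
  rw [mulE_shift, mul_pow, mul_pow, @norm_add_sq ℂ, inner_smul_left, norm_smul,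
    Complex.norm_real, Real.norm_of_nonneg ht, Complex.conj_ofReal]
  have e : RCLike.re (((t : ℝ) : ℂ) * inner ℂ v (mulE A v))
        = t * (inner ℂ v (mulE A v) : ℂ).re := Complex.re_ofReal_mul _ _
  rw [e]
  set y := ‖mulE A v‖
  set r := (inner ℂ v (mulE A v) : ℂ).re
  have b1 : t * (ρ * y ^ 2) ≤ t * r := by gcongr; exact h1 v
  have b2 : t ^ 2 * y ^ 2 ≤ t ^ 2 * (K * ‖v‖) ^ 2 := by gcongr; exact h2 v
  have b3 : (ρ * K) ^ 2 * y ^ 2 ≤ 1 ^ 2 * y ^ 2 := by gcongr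
  have b4 := mul_le_mul_of_nonneg_left b1 (sq_nonneg K)
  have b5 := mul_le_mul_of_nonneg_left b3 (sq_nonneg K)
  nlinarith

lemma meas_resolvent {N : ℕ} (A : Matrix (Fin N) (Fin N) ℂ) (b : E N) :
    Measurable (fun t : ℝ => mulE (((t : ℂ) • (1 : Matrix (Fin N) (Fin N) ℂ) + A)⁻¹) b) := by
  have hc : Continuous (fun t : ℝ => (t : ℂ) • (1 : Matrix (Fin N) (Fin N) ℂ) + A) := by
    fun_prop
  have e : (fun t : ℝ => mulE (((t : ℂ) • (1 : Matrix (Fin N) (Fin N) ℂ) + A)⁻¹) b) =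
      fun t : ℝ => (((t : ℂ) • (1 : Matrix (Fin N) (Fin N) ℂ) + A).det)⁻¹ •
        mulE (((t : ℂ) • (1 : Matrix (Fin N) (Fin N) ℂ) + A).adjugate) b := by
    funext t
    simp only [mulE]
    rw [Matrix.inv_def, Ring.inverse_eq_inv', map_smul, LinearMap.smul_apply]
  rw [e]
  apply Measurable.fun_smul
  · exact hc.matrix_det.measurable.inv
  · apply Continuous.measurable
    simp only [mulE, Matrix.toLpLin_apply]
    exact (PiLp.continuous_toLp 2 _).comp (hc.matrix_adjugate.matrix_mulVec continuous_const)

/-- **Convergence of sketched GMRES for Stieltjes functions of positive real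
matrices** (Theorem 3.1): if `A` is positive real,
`δ = min{Re(vᴴAv) : ‖v‖=1}`, `ρ = min{Re(vᴴA⁻¹v) : ‖v‖=1}`, `S` is an
`ε`-subspace embedding for `𝒦_{m+1}(A,b)`, and for each `t ≥ 0` the vector
`x̃_m(t) ∈ 𝒦_m(A,b)` minimizes the sketched residual norm of `(tI+A)x = b`, then
the sketched GMRES approximant `f̃_m = ∫₀^∞ x̃_m(t) dμ(t)` of
`f(A)b = ∫₀^∞ (tI+A)⁻¹b dμ(t)` satisfies
`‖f(A)b − f̃_m‖_{AᴴA} ≤ C₁ C_ε ‖b‖ (sin β₀)^m` with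
`C₁ = ‖A‖ ∫₀^∞ (t+ρ‖A‖²)⁻¹ dμ(t)`, `C_ε = √((1+ε)/(1−ε))` and
`sin β₀ = √(1 − (δ/‖A‖)²)`. -/
theorem sketched_fAb_stmt0 {N s m : ℕ} (A : Matrix (Fin N) (Fin N) ℂ) (b : E N)
    (hA : IsPositiveReal A) (δ ρ : ℝ)
    (hδ : IsLeast {r : ℝ | ∃ v : E N, ‖v‖ = 1 ∧ r = (inner ℂ v (mulE A v) : ℂ).re} δ)
    (hρ : IsLeast {r : ℝ | ∃ v : E N, ‖v‖ = 1 ∧ r = (inner ℂ v (mulE A⁻¹ v) : ℂ).re} ρ)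
    (μ : MeasureTheory.Measure ℝ)
    (hμ : MeasureTheory.IntegrableOn (fun t : ℝ => (1 + t)⁻¹) (Set.Ici 0) μ)
    (ε : ℝ) (hε0 : 0 ≤ ε) (hε1 : ε < 1)
    (S : Matrix (Fin s) (Fin N) ℂ)
    (hS : IsSubspaceEmbedding S ε (Krylov A b (m + 1)))
    (xt : ℝ → E N)
    (hxt_mem : ∀ t : ℝ, 0 ≤ t → xt t ∈ Krylov A b m)
    (hxt_min : ∀ t : ℝ, 0 ≤ t → ∀ x ∈ Krylov A b m,
      ‖mulE S (b - mulE ((t : ℂ) • (1 : Matrix (Fin N) (Fin N) ℂ) + A) (xt t))‖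
        ≤ ‖mulE S (b - mulE ((t : ℂ) • (1 : Matrix (Fin N) (Fin N) ℂ) + A) x)‖)
    (hxt_int : MeasureTheory.IntegrableOn xt (Set.Ici 0) μ) :
    ‖mulE A ((∫ t in Set.Ici (0 : ℝ),
          mulE (((t : ℂ) • (1 : Matrix (Fin N) (Fin N) ℂ) + A)⁻¹) b ∂μ)
        - ∫ t in Set.Ici (0 : ℝ), xt t ∂μ)‖
      ≤ (opNorm A * ∫ t in Set.Ici (0 : ℝ), (t + ρ * opNorm A ^ 2)⁻¹ ∂μ)
          * Real.sqrt ((1 + ε) / (1 - ε)) * ‖b‖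
          * Real.sqrt (1 - (δ / opNorm A) ^ 2) ^ m := by
  have hδ1 := re_lower A δ (fun v hv => hδ.2 ⟨v, hv, rfl⟩)
  have hρ1 := re_lower A⁻¹ ρ (fun v hv => hρ.2 ⟨v, hv, rfl⟩)
  obtain ⟨v0, hv0, hδv⟩ := hδ.1
  obtain ⟨w0, hw0, hρw⟩ := hρ.1
  have hne : ∀ v : E N, ‖v‖ = 1 → v ≠ 0 := by
    rintro v hv rfl; simp at hv
  have hδpos : 0 < δ := hδv ▸ hA v0 (hne v0 hv0)
  set K := opNorm A with hKdef
  have hAK : ∀ v : E N, ‖mulE A v‖ ≤ K * ‖v‖ := norm_mulE_le A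
  have hδK : δ ≤ K := by
    have h1 := hAK v0
    have h2 : (inner ℂ v0 (mulE A v0) : ℂ).re ≤ ‖v0‖ * ‖mulE A v0‖ :=
      re_inner_le_norm (𝕜 := ℂ) v0 (mulE A v0)
    rw [hv0] at h1 h2
    linarith
  have hKpos : 0 < K := by linarith
  -- invertibility of the shifted matrices
  have hlow : ∀ t : ℝ, 0 ≤ t → ∀ v : E N, (δ + t) * ‖v‖ ^ 2 ≤
      (inner ℂ v (mulE ((t : ℂ) • (1 : Matrix (Fin N) (Fin N) ℂ) + A) v) : ℂ).re := by
    intro t ht v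
    rw [mulE_shift, inner_add_right, inner_smul_right, Complex.add_re, Complex.re_ofReal_mul]
    have : (inner ℂ v v : ℂ).re = ‖v‖ ^ 2 := inner_self_eq_norm_sq (𝕜 := ℂ) v
    rw [this]
    linarith [hδ1 v]
  have hlow2 : ∀ t : ℝ, 0 ≤ t → ∀ v : E N, (δ + t) * ‖v‖ ≤
      ‖mulE ((t : ℂ) • (1 : Matrix (Fin N) (Fin N) ℂ) + A) v‖ := by
    intro t ht v
    by_cases hv : v = 0
    · simp [hv]
    have hn : 0 < ‖v‖ := norm_pos_iff.mpr hv
    have h2 : (inner ℂ v (mulE ((t : ℂ) • (1 : Matrix (Fin N) (Fin N) ℂ) + A) v) : ℂ).re ≤ _ :=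
      re_inner_le_norm (𝕜 := ℂ) v _
    have h3 := (hlow t ht v).trans h2
    refine le_of_mul_le_mul_left ?_ hn
    linarith
  have hdet : ∀ t : ℝ, 0 ≤ t →
      IsUnit ((t : ℂ) • (1 : Matrix (Fin N) (Fin N) ℂ) + A).det := by
    intro t ht
    apply isUnit_det_of_inj
    intro v hv
    have h3 := hlow2 t ht v
    rw [hv, norm_zero] at h3
    by_contra hv0
    have hn : 0 < ‖v‖ := norm_pos_iff.mpr hv0
    nlinarith [mul_pos hδpos hn, mul_nonneg ht hn.le]
  have hdetA : IsUnit A.det := by simpa using hdet 0 le_rfl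
  have hinvA : ∀ v : E N, mulE A⁻¹ (mulE A v) = v := by
    intro v
    rw [← mulE_mul, Matrix.nonsing_inv_mul _ hdetA, mulE_one]
  have hAinv : ∀ v : E N, mulE A (mulE A⁻¹ v) = v := by
    intro v
    rw [← mulE_mul, Matrix.mul_nonsing_inv _ hdetA, mulE_one]
  have hsymm : ∀ v w : E N, (inner ℂ v w : ℂ).re = (inner ℂ w v : ℂ).re :=
    fun v w => inner_re_symm (𝕜 := ℂ) v w
  have hρ2 : ∀ v : E N, ρ * ‖mulE A v‖ ^ 2 ≤ (inner ℂ v (mulE A v) : ℂ).re := by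
    intro v
    have := hρ1 (mulE A v)
    rwa [hinvA, hsymm] at this
  have hρpos : 0 < ρ := by
    have h1 : mulE A⁻¹ w0 ≠ 0 := by
      intro h
      have := hAinv w0
      rw [h, mulE_zero] at this
      exact hne w0 hw0 this.symm
    have h2 := hA _ h1
    rw [hAinv, hsymm] at h2
    rw [hρw]; exact h2
  have hρK : ρ * K ≤ 1 := by
    have : K ≤ ρ⁻¹ := by
      apply ContinuousLinearMap.opNorm_le_bound _ (by positivity)
      intro v
      change ‖mulE A v‖ ≤ _
      by_cases hv : mulE A v = 0
      · rw [hv, norm_zero]; positivity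
      have hn : 0 < ‖mulE A v‖ := norm_pos_iff.mpr hv
      have h2 : (inner ℂ v (mulE A v) : ℂ).re ≤ ‖v‖ * ‖mulE A v‖ :=
        re_inner_le_norm (𝕜 := ℂ) v (mulE A v)
      have h3 := (hρ2 v).trans h2
      have h4 : ρ * ‖mulE A v‖ ≤ ‖v‖ := by
        refine le_of_mul_le_mul_right ?_ hn
        linarith
      rw [inv_mul_eq_div, le_div_iff₀ hρpos]
      linarith
    calc ρ * K ≤ ρ * ρ⁻¹ := by gcongr
      _ = 1 := by field_simp
  have hε' : 0 < 1 - ε := by linarith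
  set q := Real.sqrt (1 - (δ / K) ^ 2) with hqdef
  have hq0 : 0 ≤ q := Real.sqrt_nonneg _
  set C := Real.sqrt ((1 + ε) / (1 - ε)) with hCdef
  -- residual bound
  have hres : ∀ t : ℝ, 0 ≤ t →
      ‖b - mulE ((t : ℂ) • (1 : Matrix (Fin N) (Fin N) ℂ) + A) (xt t)‖ ≤ C * (‖b‖ * q ^ m) := by
    intro t ht
    have hup : ∀ v : E N, ‖mulE ((t : ℂ) • (1 : Matrix (Fin N) (Fin N) ℂ) + A) v‖
        ≤ (K + t) * ‖v‖ := by
      intro v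
      rw [mulE_shift]
      refine (norm_add_le _ _).trans ?_
      rw [norm_smul, Complex.norm_real, Real.norm_of_nonneg ht]
      linarith [hAK v]
    have hst := step_bound _ (δ + t) (K + t) (by linarith) (by linarith) (hlow t ht) hup
    have hqt : Real.sqrt (1 - ((δ + t) / (K + t)) ^ 2) ≤ q := by
      apply Real.sqrt_le_sqrt
      have : δ / K ≤ (δ + t) / (K + t) := by
        rw [div_le_div_iff₀ hKpos (by linarith)]
        nlinarith
      gcongr
    obtain ⟨x, hx, hxr⟩ := exists_poly A b t _ q hq0
      (fun v => (hst v).trans (by gcongr)) m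
    have hm := hxt_min t ht x hx
    have s1 := (hS _ (krylov_res A b m t _ (hxt_mem t ht))).1
    have s2 := (hS _ (krylov_res A b m t _ hx)).2
    apply abs_le_of_sq_le_sq' _ (by positivity) |>.2
    rw [mul_pow, Real.sq_sqrt (by positivity), div_mul_eq_mul_div, le_div_iff₀ hε']
    have s3 := pow_le_pow_left₀ (norm_nonneg _) hm 2
    have s4 := pow_le_pow_left₀ (norm_nonneg _) hxr 2
    have s5 := mul_le_mul_of_nonneg_left s4 (by linarith : 0 ≤ 1 + ε)
    linarith
  -- integrability
  have hInt : ∀ c : ℝ, 0 < c → IntegrableOn (fun t : ℝ => (t + c)⁻¹) (Set.Ici 0) μ := by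
    intro c hc
    refine Integrable.mono' (hμ.const_mul (1 + c⁻¹))
      (by fun_prop) ?_
    refine (ae_restrict_iff' measurableSet_Ici).mpr (Filter.Eventually.of_forall ?_)
    intro t ht
    have ht : 0 ≤ t := ht
    rw [Real.norm_of_nonneg (by positivity), ← div_eq_mul_inv, le_div_iff₀ (by positivity),
      inv_mul_le_iff₀ (by positivity)]
    have : c * c⁻¹ = 1 := by field_simp
    have : 0 ≤ t * c⁻¹ := by positivity
    nlinarith
  have hinv : ∀ t : ℝ, 0 ≤ t → mulE ((t : ℂ) • (1 : Matrix (Fin N) (Fin N) ℂ) + A)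
      (mulE (((t : ℂ) • (1 : Matrix (Fin N) (Fin N) ℂ) + A)⁻¹) b) = b := by
    intro t ht
    rw [← mulE_mul, Matrix.mul_nonsing_inv _ (hdet t ht), mulE_one]
  have hgint : IntegrableOn
      (fun t : ℝ => mulE (((t : ℂ) • (1 : Matrix (Fin N) (Fin N) ℂ) + A)⁻¹) b)
      (Set.Ici 0) μ := by
    refine Integrable.mono' ((hInt δ hδpos).mul_const ‖b‖)
      (meas_resolvent A b).aestronglyMeasurable ?_
    refine (ae_restrict_iff' measurableSet_Ici).mpr (Filter.Eventually.of_forall ?_)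
    intro t ht
    have ht : 0 ≤ t := ht
    have h1 := hlow2 t ht (mulE (((t : ℂ) • (1 : Matrix (Fin N) (Fin N) ℂ) + A)⁻¹) b)
    rw [hinv t ht] at h1
    rw [inv_mul_eq_div, le_div_iff₀ (by positivity)]
    linarith
  rw [← integral_sub hgint hxt_int]
  have hcomm := (LinearMap.toContinuousLinearMap (Matrix.toEuclideanLin A)).integral_comp_comm
    (hgint.sub hxt_int)
  have hcpos : 0 < ρ * K ^ 2 := by positivity
  have hfin : ‖∫ t in Set.Ici (0 : ℝ),
      (LinearMap.toContinuousLinearMap (Matrix.toEuclideanLin A))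
        (mulE (((t : ℂ) • (1 : Matrix (Fin N) (Fin N) ℂ) + A)⁻¹) b - xt t) ∂μ‖ ≤
      ∫ t in Set.Ici (0 : ℝ), (t + ρ * K ^ 2)⁻¹ * (K * (C * (‖b‖ * q ^ m))) ∂μ := by
    apply norm_integral_le_of_norm_le ((hInt _ hcpos).mul_const _)
    refine (ae_restrict_iff' measurableSet_Ici).mpr (Filter.Eventually.of_forall ?_)
    intro t ht
    have ht : 0 ≤ t := ht
    change ‖mulE A _‖ ≤ _
    have h1 := resolvent_bound A ρ K t hKpos ht hρpos.le hρK hρ2 hAK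
      (mulE (((t : ℂ) • (1 : Matrix (Fin N) (Fin N) ℂ) + A)⁻¹) b - xt t)
    rw [mulE_sub ((t : ℂ) • (1 : Matrix (Fin N) (Fin N) ℂ) + A), hinv t ht] at h1
    rw [inv_mul_eq_div, le_div_iff₀ (by positivity)]
    exact h1.trans (by gcongr; exact hres t ht)
  rw [integral_mul_const] at hfin
  have hL : mulE A (∫ t in Set.Ici (0 : ℝ),
      (mulE (((t : ℂ) • (1 : Matrix (Fin N) (Fin N) ℂ) + A)⁻¹) b - xt t) ∂μ) = _ := hcomm.symm
  rw [hL]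
  refine hfin.trans (le_of_eq ?_)
  ring
end
end

section
/- Let A ∈ ℂ^{N×N} be positive real and set ρ := min{Re(vᴴA⁻¹v) : ‖v‖ = 1}. Then for all v ∈ ℂᴺ and all t ≥ 0, (‖A‖⁻²t² + 2ρt + 1) · ‖Av‖² ≤ ‖(A+tI)v‖². -/
open Matrix MeasureTheory

noncomputable section

/-- **Lemma (i)**: for a positive real matrix `A` with
`ρ = min{Re(vᴴA⁻¹v) : ‖v‖ = 1}`, every `v ∈ ℂᴺ` and `t ≥ 0` satisfy
`(‖A‖⁻²t² + 2ρt + 1)‖Av‖² ≤ ‖(A+tI)v‖²`. -/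
theorem sketched_fAb_stmt2 {N : ℕ} (A : Matrix (Fin N) (Fin N) ℂ)
    (hA : IsPositiveReal A) (ρ : ℝ)
    (hρ : IsLeast {r : ℝ | ∃ v : E N, ‖v‖ = 1 ∧ r = (inner ℂ v (mulE A⁻¹ v) : ℂ).re} ρ)
    (v : E N) (t : ℝ) (ht : 0 ≤ t) :
    (((opNorm A) ^ 2)⁻¹ * t ^ 2 + 2 * ρ * t + 1) * ‖mulE A v‖ ^ 2
      ≤ ‖mulE (A + (t : ℂ) • (1 : Matrix (Fin N) (Fin N) ℂ)) v‖ ^ 2 := by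
  have hmul : ∀ (B C : Matrix (Fin N) (Fin N) ℂ) (x : E N),
      mulE (B * C) x = mulE B (mulE C x) := by
    intro B C x
    simp [mulE, Matrix.toLpLin_apply, Matrix.mulVec_mulVec]
  have hone : ∀ x : E N, mulE (1 : Matrix (Fin N) (Fin N) ℂ) x = x := by
    intro x
    simp [mulE, Matrix.toLpLin_apply]
  have hadd : mulE (A + (t : ℂ) • (1 : Matrix (Fin N) (Fin N) ℂ)) v
      = mulE A v + (t : ℂ) • v := by
    have h1 := hone v
    unfold mulE at h1 ⊢
    rw [map_add, map_smul, LinearMap.add_apply, LinearMap.smul_apply, h1]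
  have hdet : IsUnit A.det := by
    rw [isUnit_iff_ne_zero]
    intro h0
    obtain ⟨x, hx, hAx⟩ := Matrix.exists_mulVec_eq_zero_iff.mpr h0
    have hp := hA (WithLp.toLp 2 x) (by
      intro h
      apply hx
      simpa using h)
    have hz : mulE A (WithLp.toLp 2 x) = 0 := by
      simp [mulE, Matrix.toLpLin_apply, hAx]
    rw [hz] at hp
    simp at hp
  have hinv : mulE A⁻¹ (mulE A v) = v := by
    rw [← hmul, Matrix.nonsing_inv_mul A hdet, hone]
  have hop : ‖mulE A v‖ ≤ opNorm A * ‖v‖ :=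
    (LinearMap.toContinuousLinearMap (Matrix.toEuclideanLin A)).le_opNorm v
  have hopn : 0 ≤ opNorm A := norm_nonneg _
  have hlow : ρ * ‖mulE A v‖ ^ 2 ≤ (inner ℂ (mulE A v) v : ℂ).re := by
    by_cases hw : mulE A v = 0
    · simp [hw]
    have hn : 0 < ‖mulE A v‖ := norm_pos_iff.mpr hw
    have h := hρ.2 ⟨((‖mulE A v‖⁻¹ : ℝ) : ℂ) • mulE A v, by
      rw [norm_smul]
      simp [hn.ne'], rfl⟩
    have e : mulE A⁻¹ (((‖mulE A v‖⁻¹ : ℝ) : ℂ) • mulE A v)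
        = ((‖mulE A v‖⁻¹ : ℝ) : ℂ) • v := by
      have h2 : ∀ (c : ℂ) (x : E N), mulE A⁻¹ (c • x) = c • mulE A⁻¹ x :=
        fun c x => map_smul (Matrix.toEuclideanLin A⁻¹) c x
      rw [h2, hinv]
    rw [e, inner_smul_left, inner_smul_right, Complex.conj_ofReal,
      Complex.re_ofReal_mul, Complex.re_ofReal_mul] at h
    calc ρ * ‖mulE A v‖ ^ 2
        ≤ (‖mulE A v‖⁻¹ * (‖mulE A v‖⁻¹ * (inner ℂ (mulE A v) v : ℂ).re)) * ‖mulE A v‖ ^ 2 := by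
          gcongr
      _ = _ := by field_simp
  have hsq : ((opNorm A) ^ 2)⁻¹ * ‖mulE A v‖ ^ 2 ≤ ‖v‖ ^ 2 := by
    rcases hopn.eq_or_lt with h0 | h0
    · rw [← h0]
      simp
    · rw [inv_mul_le_iff₀ (by positivity), ← mul_pow]
      gcongr
  have hexp : ‖mulE A v + (t : ℂ) • v‖ ^ 2
      = ‖mulE A v‖ ^ 2 + 2 * (t * (inner ℂ (mulE A v) v : ℂ).re) + t ^ 2 * ‖v‖ ^ 2 := by
    rw [@norm_add_sq ℂ, inner_smul_right, norm_smul, mul_pow]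
    simp
  rw [hadd, hexp]
  nlinarith [mul_le_mul_of_nonneg_left hlow ht, mul_le_mul_of_nonneg_left hsq (sq_nonneg t)]
end
end

section
/- Let A ∈ ℂ^{N×N}, b ∈ ℂᴺ, t ∈ ℂ, let ε ∈ [0,1), and let S ∈ ℂ^{s×N} be an ε-subspace embedding for the Krylov space 𝒦_{m+1}(A,b). Suppose x̃ ∈ 𝒦_m(A,b) satisfies ‖S(b−(tI+A)x̃)‖ ≤ ‖S(b−(tI+A)x)‖ for all x ∈ 𝒦_m(A,b), and suppose x* ∈ 𝒦_m(A,b) satisfies ‖b−(tI+A)x*‖ ≤ ‖b−(tI+A)x‖ for all x ∈ 𝒦_m(A,b). Then ‖b−(tI+A)x̃‖ ≤ √((1+ε)/(1−ε)) · ‖b−(tI+A)x*‖. -/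
open Matrix MeasureTheory

noncomputable section

theorem krylov_residual_mem {N m : ℕ} (A : Matrix (Fin N) (Fin N) ℂ) (b : E N) (t : ℂ)
    (x : E N) (hx : x ∈ Krylov A b m) :
    b - mulE (t • (1 : Matrix (Fin N) (Fin N) ℂ) + A) x ∈ Krylov A b (m + 1) := by
  have hb : b ∈ Krylov A b (m + 1) :=
    Submodule.subset_span ⟨0, Nat.succ_pos m, by simp [mulE, Matrix.toLpLin_apply]⟩
  refine Submodule.sub_mem _ hb ?_
  have hle : Krylov A b m ≤ (Krylov A b (m + 1)).comap
      (Matrix.toEuclideanLin (t • (1 : Matrix (Fin N) (Fin N) ℂ) + A)) := by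
    refine Submodule.span_le.2 ?_
    rintro v ⟨j, hj, rfl⟩
    have e : Matrix.toEuclideanLin (t • (1 : Matrix (Fin N) (Fin N) ℂ) + A) (mulE (A ^ j) b)
        = t • mulE (A ^ j) b + mulE (A ^ (j + 1)) b := by
      simp [mulE, Matrix.toLpLin_apply, Matrix.add_mulVec, Matrix.smul_mulVec, pow_succ']
    change Matrix.toEuclideanLin _ _ ∈ Krylov A b (m + 1)
    rw [e]
    exact Submodule.add_mem _
      (Submodule.smul_mem _ _ (Submodule.subset_span ⟨j, by omega, rfl⟩))
      (Submodule.subset_span ⟨j + 1, by omega, rfl⟩)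
  exact hle hx

/-- Quasi-optimality of the sketched GMRES residual: if `S` is an `ε`-subspace embedding
for `𝒦_{m+1}(A,b)`, `x̃` minimizes the sketched residual norm and `x*` minimizes the
true residual norm over `𝒦_m(A,b)`, then
`‖b − (tI+A)x̃‖ ≤ √((1+ε)/(1−ε)) ‖b − (tI+A)x*‖`. -/
theorem sketched_fAb_stmt5 {N s m : ℕ} (A : Matrix (Fin N) (Fin N) ℂ) (b : E N)
    (t : ℂ) (ε : ℝ) (hε0 : 0 ≤ ε) (hε1 : ε < 1)
    (S : Matrix (Fin s) (Fin N) ℂ)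
    (hS : IsSubspaceEmbedding S ε (Krylov A b (m + 1)))
    (xt xs : E N)
    (hxt_mem : xt ∈ Krylov A b m) (hxs_mem : xs ∈ Krylov A b m)
    (hxt_min : ∀ x ∈ Krylov A b m,
      ‖mulE S (b - mulE (t • (1 : Matrix (Fin N) (Fin N) ℂ) + A) xt)‖
        ≤ ‖mulE S (b - mulE (t • (1 : Matrix (Fin N) (Fin N) ℂ) + A) x)‖)
    (hxs_min : ∀ x ∈ Krylov A b m,
      ‖b - mulE (t • (1 : Matrix (Fin N) (Fin N) ℂ) + A) xs‖
        ≤ ‖b - mulE (t • (1 : Matrix (Fin N) (Fin N) ℂ) + A) x‖) :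
    ‖b - mulE (t • (1 : Matrix (Fin N) (Fin N) ℂ) + A) xt‖
      ≤ Real.sqrt ((1 + ε) / (1 - ε))
          * ‖b - mulE (t • (1 : Matrix (Fin N) (Fin N) ℂ) + A) xs‖ := by
  have h1 := (hS _ (krylov_residual_mem A b t xt hxt_mem)).1
  have h2 := (hS _ (krylov_residual_mem A b t xs hxs_mem)).2
  have h3 := pow_le_pow_left₀ (norm_nonneg _) (hxt_min xs hxs_mem) 2
  have hpos : 0 < 1 - ε := by linarith
  have hq : 0 ≤ (1 + ε) / (1 - ε) := div_nonneg (by linarith) hpos.le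
  refine (pow_le_pow_iff_left₀ (norm_nonneg _) (by positivity) two_ne_zero).1 ?_
  rw [mul_pow, Real.sq_sqrt hq, div_mul_eq_mul_div, le_div_iff₀ hpos]
  linarith
end
end

section
/- Let A ∈ ℂ^{N×N}, V ∈ ℂ^{N×m}, v ∈ ℂᴺ, H ∈ ℂ^{m×m} and h ∈ ℂ satisfy the Arnoldi relation AV = VH + h·v·e_mᵀ, where e_m is the m-th standard basis vector of ℂ^m. Let S ∈ ℂ^{s×N} satisfy the whitening condition (SV)ᴴSV = I_m, and let b = β·V e₁ for some β ∈ ℂ. Then VᴴSᴴSAV = H + h·((SV)ᴴSv)·e_mᵀ and VᴴSᴴSb = β·e₁. In particular, the sketched Rayleigh quotient VᴴSᴴSAV equals the rank-one update Ĥ := H + h·x̂·e_mᵀ of H with x̂ = (SV)ᴴSv, and VᴴSᴴSb = β e₁. -/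
open Matrix MeasureTheory

noncomputable section

/-- Outer product `u wᵀ` of two Euclidean vectors. -/
def outerE {p q : ℕ} (u : E p) (w : E q) : Matrix (Fin p) (Fin q) ℂ :=
  fun i j => u i * w j

theorem mulE_mulE_aux {p q r : ℕ} (M : Matrix (Fin p) (Fin q) ℂ) (K : Matrix (Fin q) (Fin r) ℂ)
    (v : E r) : mulE M (mulE K v) = mulE (M * K) v := by
  simp [mulE, Matrix.toLpLin_apply, Matrix.mulVec_mulVec]

theorem mul_outerE_aux {p q r : ℕ} (M : Matrix (Fin p) (Fin q) ℂ) (u : E q) (w : E r) :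
    M * outerE u w = outerE (mulE M u) w := by
  ext i j
  simp [mulE, outerE, Matrix.toLpLin_apply, Matrix.mul_apply, Matrix.mulVec, dotProduct,
    Finset.sum_mul, mul_assoc]

theorem sketched_fAb_stmt7 {N s m : ℕ} (hm : 0 < m)
    (A : Matrix (Fin N) (Fin N) ℂ) (V : Matrix (Fin N) (Fin m) ℂ)
    (v : E N) (H : Matrix (Fin m) (Fin m) ℂ) (h : ℂ)
    (S : Matrix (Fin s) (Fin N) ℂ) (β : ℂ) (b : E N)
    (harnoldi : A * V = V * H
      + h • outerE v (EuclideanSpace.single (⟨m - 1, by omega⟩ : Fin m) 1))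
    (hwhite : (S * V)ᴴ * (S * V) = (1 : Matrix (Fin m) (Fin m) ℂ))
    (hb : b = β • mulE V (EuclideanSpace.single (⟨0, hm⟩ : Fin m) 1)) :
    Vᴴ * Sᴴ * S * A * V = H
      + h • outerE (mulE ((S * V)ᴴ) (mulE S v))
          (EuclideanSpace.single (⟨m - 1, by omega⟩ : Fin m) 1)
    ∧ mulE (Vᴴ * Sᴴ * S) b = β • EuclideanSpace.single (⟨0, hm⟩ : Fin m) 1 := by
  have hw : Vᴴ * Sᴴ * S * V = 1 := by
    rw [← hwhite, Matrix.conjTranspose_mul]; simp only [Matrix.mul_assoc]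
  constructor
  · rw [Matrix.mul_assoc _ A V, harnoldi, Matrix.mul_add, ← Matrix.mul_assoc, hw, Matrix.one_mul,
      Matrix.mul_smul, mul_outerE_aux, mulE_mulE_aux, Matrix.conjTranspose_mul]
  · have h1 : mulE (Vᴴ * Sᴴ * S) b = β • mulE (Vᴴ * Sᴴ * S)
        (mulE V (EuclideanSpace.single (⟨0, hm⟩ : Fin m) 1)) := by
      rw [hb]; exact map_smul _ _ _
    rw [h1, mulE_mulE_aux, hw]
    simp [mulE, Matrix.toLpLin_apply]
end
end

section
/- Let A ∈ ℂ^{N×N}, V ∈ ℂ^{N×m}, v̂ ∈ ℂᴺ, η ∈ ℂ, and let Ĥ ∈ ℂ^{m×m} be upper Hessenberg (i.e. Ĥ_{ij} = 0 whenever i > j+1), such that the Arnoldi-like decomposition AV = VĤ + η·v̂·e_mᵀ holds. Then for every polynomial q of degree at most m−1, q(A)·(V e₁) = V·q(Ĥ)·e₁. -/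
open Matrix MeasureTheory

noncomputable section

lemma mulE_mul_aux {p q r : ℕ} (M : Matrix (Fin p) (Fin q) ℂ) (L : Matrix (Fin q) (Fin r) ℂ)
    (v : E r) : mulE M (mulE L v) = mulE (M * L) v := by
  simp [mulE, Matrix.toLpLin_apply, Matrix.mulVec_mulVec]

lemma hess_pow_aux {m : ℕ} (hm : 0 < m) (H : Matrix (Fin m) (Fin m) ℂ)
    (hH : ∀ i j : Fin m, (j : ℕ) + 1 < (i : ℕ) → H i j = 0) (k : ℕ) :
    ∀ i : Fin m, k < (i : ℕ) → (H ^ k) i ⟨0, hm⟩ = 0 := by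
  induction k with
  | zero =>
    intro i hi
    rw [pow_zero, Matrix.one_apply_ne]
    intro h
    rw [h] at hi
    simp at hi
  | succ k ih =>
    intro i hi
    rw [pow_succ', Matrix.mul_apply]
    refine Finset.sum_eq_zero fun l _ => ?_
    by_cases hl : k < (l : ℕ)
    · rw [ih l hl, mul_zero]
    · rw [hH i l (by omega), zero_mul]

lemma pow_aux {N m : ℕ} (hm : 0 < m)
    (A : Matrix (Fin N) (Fin N) ℂ) (V : Matrix (Fin N) (Fin m) ℂ)
    (vhat : E N) (η : ℂ) (last : Fin m) (hlast : (last : ℕ) = m - 1) (H : Matrix (Fin m) (Fin m) ℂ)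
    (hH : ∀ i j : Fin m, (j : ℕ) + 1 < (i : ℕ) → H i j = 0)
    (ha : A * V = V * H
      + η • outerE vhat (EuclideanSpace.single last 1))
    (k : ℕ) (hk : k ≤ m - 1) (i : Fin N) :
    (A ^ k * V) i ⟨0, hm⟩ = (V * H ^ k) i ⟨0, hm⟩ := by
  induction k generalizing i with
  | zero => simp
  | succ k ih =>
    have h1 : (A * (A ^ k * V)) i ⟨0, hm⟩ = (A * (V * H ^ k)) i ⟨0, hm⟩ := by
      rw [Matrix.mul_apply, Matrix.mul_apply]
      exact Finset.sum_congr rfl fun l _ => by rw [ih (by omega) l]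
    rw [pow_succ', Matrix.mul_assoc, h1, ← Matrix.mul_assoc, ha, Matrix.add_mul,
      Matrix.add_apply, Matrix.mul_assoc, ← pow_succ']
    have h2 : ((η • outerE vhat (EuclideanSpace.single last 1))
        * H ^ k) i ⟨0, hm⟩ = 0 := by
      rw [Matrix.mul_apply]
      refine Finset.sum_eq_zero fun l _ => ?_
      by_cases hl : l = last
      · rw [hess_pow_aux hm H hH k l (by rw [hl]; omega), mul_zero]
      · simp [outerE, hl]
    rw [h2, add_zero, pow_succ']

/-- Exactness of Arnoldi-like decompositions: if `AV = VĤ + η v̂ e_mᵀ` with `Ĥ`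
upper Hessenberg, then `q(A)(Ve₁) = V q(Ĥ) e₁` for every polynomial `q` of degree
at most `m−1`. -/
theorem sketched_fAb_stmt8 {N m : ℕ} (hm : 0 < m)
    (A : Matrix (Fin N) (Fin N) ℂ) (V : Matrix (Fin N) (Fin m) ℂ)
    (vhat : E N) (η : ℂ) (Hhat : Matrix (Fin m) (Fin m) ℂ)
    (hHess : ∀ i j : Fin m, (j : ℕ) + 1 < (i : ℕ) → Hhat i j = 0)
    (harnoldi : A * V = V * Hhat
      + η • outerE vhat (EuclideanSpace.single (⟨m - 1, by omega⟩ : Fin m) 1))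
    (q : Polynomial ℂ) (hq : q.natDegree ≤ m - 1) :
    mulE (Polynomial.aeval A q) (mulE V (EuclideanSpace.single (⟨0, hm⟩ : Fin m) 1))
      = mulE V (mulE (Polynomial.aeval Hhat q)
          (EuclideanSpace.single (⟨0, hm⟩ : Fin m) 1)) := by
  rw [mulE_mul_aux, mulE_mul_aux]
  have key : ∀ i, (Polynomial.aeval A q * V) i ⟨0, hm⟩
      = (V * Polynomial.aeval Hhat q) i ⟨0, hm⟩ := by
    intro i
    rw [Polynomial.aeval_eq_sum_range, Polynomial.aeval_eq_sum_range, Matrix.sum_mul,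
      Matrix.mul_sum, Matrix.sum_apply, Matrix.sum_apply]
    refine Finset.sum_congr rfl fun k hk => ?_
    have hk' := Finset.mem_range.1 hk
    rw [Matrix.smul_mul, Matrix.mul_smul, Matrix.smul_apply, Matrix.smul_apply,
      pow_aux hm A V vhat η _ rfl Hhat hHess harnoldi k (by omega) i]
  ext i
  simp only [mulE, Matrix.toLpLin_apply, PiLp.ofLp_single, Matrix.mulVec_single_one]
  exact key i
end
end

section
/- Let A ∈ ℂ^{N×N}, b ∈ ℂᴺ, t ∈ ℂ, S ∈ ℂ^{s×N}, V ∈ ℂ^{N×m}, and let R ∈ ℂ^{m×m} be invertible. Set W := VR⁻¹. If the matrix (SV)ᴴ(t·SV + SAV) is invertible, then (SW)ᴴ(t·SW + SAW) is invertible and the sketched Galerkin approximant is independent of the choice of basis: W·[(SW)ᴴ(t·SW + SAW)]⁻¹·(SW)ᴴ·Sb = V·[(SV)ᴴ(t·SV + SAV)]⁻¹·(SV)ᴴ·Sb. -/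
open Matrix MeasureTheory

noncomputable section

/-- The sketched Galerkin (sketched FOM) approximant is independent of the choice of
Krylov basis: replacing `V` by `W = VR⁻¹` with `R` invertible leaves the approximant
unchanged. -/
theorem sketched_fAb_stmt9 {N s m : ℕ}
    (A : Matrix (Fin N) (Fin N) ℂ) (b : E N) (t : ℂ)
    (S : Matrix (Fin s) (Fin N) ℂ) (V : Matrix (Fin N) (Fin m) ℂ)
    (R : Matrix (Fin m) (Fin m) ℂ) (hR : IsUnit R)
    (hinv : IsUnit ((S * V)ᴴ * (t • (S * V) + S * A * V))) :
    IsUnit ((S * (V * R⁻¹))ᴴ * (t • (S * (V * R⁻¹)) + S * A * (V * R⁻¹)))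
    ∧ mulE ((V * R⁻¹)
          * ((S * (V * R⁻¹))ᴴ * (t • (S * (V * R⁻¹)) + S * A * (V * R⁻¹)))⁻¹
          * (S * (V * R⁻¹))ᴴ * S) b
      = mulE (V * ((S * V)ᴴ * (t • (S * V) + S * A * V))⁻¹ * (S * V)ᴴ * S) b := by
  have key : (S * (V * R⁻¹))ᴴ * (t • (S * (V * R⁻¹)) + S * A * (V * R⁻¹))
      = (R⁻¹)ᴴ * ((S * V)ᴴ * (t • (S * V) + S * A * V)) * R⁻¹ := by
    simp only [Matrix.conjTranspose_mul, Matrix.mul_assoc, Matrix.mul_add, Matrix.add_mul,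
      Matrix.smul_mul, Matrix.mul_smul]
  have hRd : IsUnit R.det := (Matrix.isUnit_iff_isUnit_det R).1 hR
  have hRi : IsUnit R⁻¹ := Matrix.isUnit_nonsing_inv_iff.2 hR
  have hRh : IsUnit (R⁻¹)ᴴ := hRi.star
  have hRhd : IsUnit ((R⁻¹)ᴴ).det := (Matrix.isUnit_iff_isUnit_det _).1 hRh
  have hSW : (S * (V * R⁻¹))ᴴ = (R⁻¹)ᴴ * (S * V)ᴴ := by
    rw [← Matrix.mul_assoc, Matrix.conjTranspose_mul]
  rw [key, hSW]
  refine ⟨(hRh.mul hinv).mul hRi, ?_⟩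
  congr 1
  generalize (S * V)ᴴ * (t • (S * V) + S * A * V) = G
  generalize (R⁻¹)ᴴ = Q at *
  rw [Matrix.mul_inv_rev, Matrix.mul_inv_rev, Matrix.nonsing_inv_nonsing_inv R hRd]
  congr 1
  calc V * R⁻¹ * (R * (G⁻¹ * Q⁻¹)) * (Q * (S * V)ᴴ)
      = V * ((R⁻¹ * R) * (G⁻¹ * ((Q⁻¹ * Q) * (S * V)ᴴ))) := by
        simp only [Matrix.mul_assoc]
    _ = V * G⁻¹ * (S * V)ᴴ := by
        rw [Matrix.nonsing_inv_mul R hRd, Matrix.nonsing_inv_mul Q hRhd, Matrix.one_mul,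
          Matrix.one_mul, Matrix.mul_assoc]
end
end
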